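/- The Fréchet (cofinite) filter on ℕ is a p-filter: whenever N belongs to the cofinite filter and Z is admissible for N, the set N \ Z is still cofinite. -/

import Mathlib

/-- `H` is an order-convex subset of `N`: it is contained in `N` and contains every
natural number lying strictly between two of its elements. -/
def OrdConnIn (N H : Set ℕ) : Prop :=
  H ⊆ N ∧ ∀ i ∈ H, ∀ j ∈ H, ∀ k : ℕ, i < k → k < j → k ∈ H

/-- `H` is a pile of `N`: a maximal order-convex subset of `N`. -/
def IsPile (N H : Set ℕ) : Prop :=
  OrdConnIn N H ∧ ∀ H' : Set ℕ, OrdConnIn N H' → H ⊆ H' → H' = H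

/-- `Z` is admissible for `N`: there is a uniform bound `k` such that every pile of `N`
meets `Z` in a finite set of cardinality at most `k`. -/
def Admissible (N Z : Set ℕ) : Prop :=
  ∃ k : ℕ, ∀ H : Set ℕ, IsPile N H → (H ∩ Z).Finite ∧ (H ∩ Z).ncard ≤ k

/-- A filter `σ` on `ℕ` is a p-filter if whenever `N ∈ σ` and `Z` is admissible for `N`,
also `N \ Z ∈ σ`. -/
def IsPFilter (σ : Filter ℕ) : Prop :=
  ∀ N ∈ σ, ∀ Z : Set ℕ, Admissible N Z → N \ Z ∈ σ

/-- The cofinite (Fréchet) filter on `ℕ` is a p-filter. -/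
theorem cofinite_isPFilter : IsPFilter (Filter.cofinite : Filter ℕ) := by
  intro N hN Z hZ
  obtain ⟨k, hk⟩ := hZ
  rw [Nat.cofinite_eq_atTop, Filter.mem_atTop_sets] at hN
  obtain ⟨m, hm⟩ := hN
  have hpile : IsPile N {n | ∀ l, n ≤ l → l ∈ N} := by
    refine ⟨⟨fun n hn => hn n le_rfl, ?_⟩, ?_⟩
    · intro i hi j _ l hil _ p hp
      exact hi p (by omega)
    · intro H' hH' hsub
      refine Set.Subset.antisymm ?_ hsub
      intro n hn l hnl
      rcases Nat.eq_or_lt_of_le hnl with h | h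
      · exact h ▸ hH'.1 hn
      · have hj : m + l + 1 ∈ H' := hsub (fun p hp => hm p (by omega))
        exact hH'.1 (hH'.2 n hn _ hj l h (by omega))
  have hfin := (hk _ hpile).1
  rw [Filter.mem_cofinite]
  refine ((Set.finite_lt_nat m).union hfin).subset ?_
  intro n hn
  by_cases h : n < m
  · exact Or.inl h
  · refine Or.inr ⟨fun p hp => hm p (by omega), ?_⟩
    by_contra hz
    exact hn ⟨hm n (by omega), hz⟩
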